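/- Let 0 < α < 1 and z > 0, and let ρ, σ be n×n positive semidefinite complex matrices. Then Q_{α,z}(ρ‖σ) ≤ (Tr ρ)^α · (Tr σ)^{1−α}. -/

import Mathlib

open Matrix
open scoped ComplexOrder

/-- Real power of a positive semidefinite matrix via the spectral decomposition,
applying `x ^ t` (real `rpow`, so with the convention `0 ^ t = 0` for `t ≠ 0`)
to the eigenvalues; returns `0` if the matrix is not Hermitian. -/
noncomputable def mpow {n : Type*} [Fintype n] [DecidableEq n]
    (A : Matrix n n ℂ) (t : ℝ) : Matrix n n ℂ :=
  if hA : A.IsHermitian then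
    (hA.eigenvectorUnitary : Matrix n n ℂ) *
      Matrix.diagonal (fun i => ((hA.eigenvalues i ^ t : ℝ) : ℂ)) *
      star (hA.eigenvectorUnitary : Matrix n n ℂ)
  else 0


/-- The α-z-Rényi quantity `Q_{α,z}(ρ‖σ) = Tr((σ^((1−α)/2z) ρ^(α/z) σ^((1−α)/2z))^z)`. -/
noncomputable def Qaz {n : Type*} [Fintype n] [DecidableEq n]
    (α z : ℝ) (ρ σ : Matrix n n ℂ) : ℝ :=
  ((mpow (mpow σ ((1 - α) / (2 * z)) * mpow ρ (α / z) * mpow σ ((1 - α) / (2 * z))) z).trace).re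

/-!
Up to the power `2z`, `Q_{α,z}(ρ‖σ)` is the Schatten (quasi)norm `‖AB‖_{2z}` of the product of
`A = ρ^{α/2z}` and `B = σ^{(1-α)/2z}`, so the bound is Hölder's inequality
`‖AB‖_r ≤ ‖A‖_p ‖B‖_q`, `1/r = 1/p + 1/q`, with `p = 2z/α`, `q = 2z/(1-α)` and `r = 2z`.

For an orthonormal basis `b`, the numbers `‖T b_j‖²` are averages of the squared singular values
`s_i²` of `T` with doubly stochastic weights. By Jensen's inequality `∑ ‖T b_j‖^p` is therefore at
most `∑ s_i^p` if `p ≥ 2`, and at least `∑ s_i^p` if `0 ≤ p ≤ 2`. When `p ≥ 2` this reduces Hölder's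
inequality for `AB` to the scalar one: if `r ≤ 2`, apply `AB` to the right singular vectors of `B`;
if `r ≥ 2`, then also `q ≥ 2`, and each singular value of `AB` is at most `‖A* u‖ ‖B v‖` for its
singular vectors `u`, `v`. When `p < 2`, replace `A` by `|A| = L^k` with `kp ≥ 2` and remove the
factors `L`, for which the exponent is `kp`, one at a time.
-/

section DoublyStochastic

variable {ι E : Type*} [Fintype ι] [DecidableEq ι] [AddCommGroup E] [Module ℝ E]

theorem sum_convexOn_le_of_mem_doublyStochastic {M : Matrix ι ι ℝ} (hM : M ∈ doublyStochastic ℝ ι)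
    {s : Set E} {f : E → ℝ} (hf : ConvexOn ℝ s f) {x : ι → E} (hx : ∀ i, x i ∈ s) :
    ∑ j, f (∑ i, M j i • x i) ≤ ∑ i, f (x i) :=
  calc ∑ j, f (∑ i, M j i • x i) ≤ ∑ j, ∑ i, M j i • f (x i) :=
        Finset.sum_le_sum fun j _ ↦ hf.map_sum_le (fun _ _ ↦ nonneg_of_mem_doublyStochastic hM)
          (sum_row_of_mem_doublyStochastic hM j) fun i _ ↦ hx i
    _ = ∑ i, (∑ j, M j i) • f (x i) := by
        rw [Finset.sum_comm]
        simp only [Finset.sum_smul]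
    _ = ∑ i, f (x i) := by simp only [sum_col_of_mem_doublyStochastic hM, one_smul]

theorem le_sum_concaveOn_of_mem_doublyStochastic {M : Matrix ι ι ℝ}
    (hM : M ∈ doublyStochastic ℝ ι) {s : Set E} {f : E → ℝ} (hf : ConcaveOn ℝ s f)
    {x : ι → E} (hx : ∀ i, x i ∈ s) :
    ∑ i, f (x i) ≤ ∑ j, f (∑ i, M j i • x i) := by
  simpa using sum_convexOn_le_of_mem_doublyStochastic hM hf.neg hx

end DoublyStochastic

theorem norm_inner_sq_mem_doublyStochastic {ι 𝕜 E : Type*} [Fintype ι] [DecidableEq ι] [RCLike 𝕜]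
    [NormedAddCommGroup E] [InnerProductSpace 𝕜 E] (v b : OrthonormalBasis ι 𝕜 E) :
    Matrix.of (fun j i ↦ ‖inner 𝕜 (v i) (b j)‖ ^ 2) ∈ doublyStochastic ℝ ι := by
  refine mem_doublyStochastic_iff_sum.2 ⟨fun _ _ ↦ sq_nonneg _, fun j ↦ ?_, fun i ↦ ?_⟩
  · simp [v.sum_sq_norm_inner_right]
  · simp [b.sum_sq_norm_inner_left]

theorem sum_mul_rpow_le_of_sum_rpow_le {ι : Type*} {t : Finset ι} {f g : ι → ℝ}
    {p q r a b : ℝ} (h : p.HolderTriple q r) (hf : ∀ i ∈ t, 0 ≤ f i) (hg : ∀ i ∈ t, 0 ≤ g i)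
    (hfa : ∑ i ∈ t, f i ^ p ≤ a) (hgb : ∑ i ∈ t, g i ^ q ≤ b) :
    ∑ i ∈ t, (f i * g i) ^ r ≤ a ^ (r / p) * b ^ (r / q) := by
  have hp : 0 ≤ r / p := div_nonneg h.nonneg' h.nonneg
  have hq : 0 ≤ r / q := div_nonneg h.nonneg' h.symm.nonneg
  have hfp : 0 ≤ ∑ i ∈ t, f i ^ p := Finset.sum_nonneg fun i hi ↦ Real.rpow_nonneg (hf i hi) p
  have hgq : 0 ≤ ∑ i ∈ t, g i ^ q := Finset.sum_nonneg fun i hi ↦ Real.rpow_nonneg (hg i hi) q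
  refine (Real.Lr_rpow_le_Lp_mul_Lq_of_nonneg t h hf hg).trans ?_
  gcongr
  exact Real.rpow_nonneg (hfp.trans hfa) _

/-- A singular value decomposition of a linear map between inner product spaces of the same
dimension. The singular values are indexed by `ι` and listed with multiplicity, zeros included,
so that both families of singular vectors are orthonormal bases. -/
structure IsSVD {ι 𝕜 E F : Type*} [Fintype ι] [RCLike 𝕜]
    [NormedAddCommGroup E] [InnerProductSpace 𝕜 E] [NormedAddCommGroup F] [InnerProductSpace 𝕜 F]
    (T : E →ₗ[𝕜] F) (s : ι → ℝ) (u : OrthonormalBasis ι 𝕜 F) (v : OrthonormalBasis ι 𝕜 E) :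
    Prop where
  nonneg : ∀ i, 0 ≤ s i
  map_right : ∀ i, T (v i) = (s i : 𝕜) • u i

namespace IsSVD

variable {ι 𝕜 E F G : Type*} [Fintype ι] [RCLike 𝕜]
  [NormedAddCommGroup E] [InnerProductSpace 𝕜 E] [NormedAddCommGroup F] [InnerProductSpace 𝕜 F]
  [NormedAddCommGroup G] [InnerProductSpace 𝕜 G]
  {T : E →ₗ[𝕜] F} {s : ι → ℝ} {u : OrthonormalBasis ι 𝕜 F} {v : OrthonormalBasis ι 𝕜 E}

theorem inner_left_map (h : IsSVD T s u v) (i : ι) (x : E) :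
    inner 𝕜 (u i) (T x) = s i * inner 𝕜 (v i) x := by
  classical
  conv_lhs => rw [← v.sum_repr' x]
  simp [h.map_right, inner_sum, inner_smul_right, u.inner_eq_ite, mul_comm]

theorem adjoint [FiniteDimensional 𝕜 E] [FiniteDimensional 𝕜 F] (h : IsSVD T s u v) :
    IsSVD T.adjoint s v u where
  nonneg := h.nonneg
  map_right i := ext_inner_right 𝕜 fun x ↦ by
    rw [LinearMap.adjoint_inner_left, h.inner_left_map, inner_smul_left, RCLike.conj_ofReal]

theorem norm_map_sq (h : IsSVD T s u v) (x : E) :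
    ‖T x‖ ^ 2 = ∑ i, ‖inner 𝕜 (v i) x‖ ^ 2 * s i ^ 2 := by
  simp [← u.sum_sq_norm_inner_right, h.inner_left_map, mul_pow, mul_comm]

theorem norm_map_rpow (h : IsSVD T s u v) (x : E) (p : ℝ) :
    ‖T x‖ ^ p = (∑ i, ‖inner 𝕜 (v i) x‖ ^ 2 * s i ^ 2) ^ (p / 2) := by
  rw [← h.norm_map_sq, ← Real.rpow_two, ← Real.rpow_mul (norm_nonneg _),
    mul_div_cancel₀ p two_ne_zero]

theorem rpow_eq_sq_rpow (h : IsSVD T s u v) (i : ι) (p : ℝ) : s i ^ p = (s i ^ 2) ^ (p / 2) := by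
  rw [← Real.rpow_two, ← Real.rpow_mul (h.nonneg i), mul_div_cancel₀ p two_ne_zero]

theorem sum_norm_map_rpow_le (h : IsSVD T s u v) {p : ℝ} (hp : 2 ≤ p)
    (b : OrthonormalBasis ι 𝕜 E) : ∑ j, ‖T (b j)‖ ^ p ≤ ∑ i, s i ^ p := by
  classical
  simp only [h.norm_map_rpow, h.rpow_eq_sq_rpow]
  exact sum_convexOn_le_of_mem_doublyStochastic (norm_inner_sq_mem_doublyStochastic v b)
    (convexOn_rpow (by linarith)) fun i ↦ sq_nonneg (s i)

theorem sum_rpow_le_sum_norm_map_rpow (h : IsSVD T s u v) {p : ℝ} (hp₀ : 0 ≤ p) (hp₂ : p ≤ 2)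
    (b : OrthonormalBasis ι 𝕜 E) : ∑ i, s i ^ p ≤ ∑ j, ‖T (b j)‖ ^ p := by
  classical
  simp only [h.norm_map_rpow, h.rpow_eq_sq_rpow]
  exact le_sum_concaveOn_of_mem_doublyStochastic (norm_inner_sq_mem_doublyStochastic v b)
    (Real.concaveOn_rpow (by linarith) (by linarith)) fun i ↦ sq_nonneg (s i)

section Comp

variable {S : F →ₗ[𝕜] G} {a b c : ι → ℝ} {u₁ : OrthonormalBasis ι 𝕜 G}
  {v₁ u₂ : OrthonormalBasis ι 𝕜 F} {v₂ v₃ : OrthonormalBasis ι 𝕜 E} {u₃ : OrthonormalBasis ι 𝕜 G}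
  {p q r : ℝ}

theorem sum_rpow_comp_le_of_le_two (hS : IsSVD S a u₁ v₁) (hT : IsSVD T b u₂ v₂)
    (hST : IsSVD (S ∘ₗ T) c u₃ v₃) (h : p.HolderTriple q r) (hp : 2 ≤ p) (hr : r ≤ 2) :
    ∑ i, c i ^ r ≤ (∑ i, a i ^ p) ^ (r / p) * (∑ i, b i ^ q) ^ (r / q) :=
  calc ∑ i, c i ^ r ≤ ∑ j, ‖S (T (v₂ j))‖ ^ r := hST.sum_rpow_le_sum_norm_map_rpow h.nonneg' hr v₂
    _ = ∑ j, (‖S (u₂ j)‖ * b j) ^ r := by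
        simp [hT.map_right, norm_smul, abs_of_nonneg (hT.nonneg _), mul_comm]
    _ ≤ _ := sum_mul_rpow_le_of_sum_rpow_le h (fun _ _ ↦ norm_nonneg _) (fun j _ ↦ hT.nonneg j)
        (hS.sum_norm_map_rpow_le hp u₂) le_rfl

theorem le_norm_adjoint_mul_norm [FiniteDimensional 𝕜 F] [FiniteDimensional 𝕜 G]
    (hST : IsSVD (S ∘ₗ T) c u₃ v₃) (j : ι) : c j ≤ ‖S.adjoint (u₃ j)‖ * ‖T (v₃ j)‖ :=
  calc c j = ‖inner 𝕜 (u₃ j) (S (T (v₃ j)))‖ := by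
        simp [← LinearMap.comp_apply, hST.map_right, inner_smul_right,
          abs_of_nonneg (hST.nonneg j), -LinearMap.coe_comp, -Function.comp_apply]
    _ = ‖inner 𝕜 (S.adjoint (u₃ j)) (T (v₃ j))‖ := by rw [LinearMap.adjoint_inner_left]
    _ ≤ _ := norm_inner_le_norm _ _

theorem sum_rpow_comp_le_of_two_le_of_two_le [FiniteDimensional 𝕜 F] [FiniteDimensional 𝕜 G]
    (hS : IsSVD S a u₁ v₁) (hT : IsSVD T b u₂ v₂) (hST : IsSVD (S ∘ₗ T) c u₃ v₃)
    (h : p.HolderTriple q r) (hp : 2 ≤ p) (hq : 2 ≤ q) :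
    ∑ i, c i ^ r ≤ (∑ i, a i ^ p) ^ (r / p) * (∑ i, b i ^ q) ^ (r / q) :=
  calc ∑ i, c i ^ r ≤ ∑ j, (‖S.adjoint (u₃ j)‖ * ‖T (v₃ j)‖) ^ r :=
        Finset.sum_le_sum fun j _ ↦
          Real.rpow_le_rpow (hST.nonneg j) (hST.le_norm_adjoint_mul_norm j) h.nonneg'
    _ ≤ _ := sum_mul_rpow_le_of_sum_rpow_le h (fun _ _ ↦ norm_nonneg _) (fun _ _ ↦ norm_nonneg _)
        (hS.adjoint.sum_norm_map_rpow_le hp u₃) (hT.sum_norm_map_rpow_le hq v₃)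

theorem sum_rpow_comp_le_of_two_le [FiniteDimensional 𝕜 F] [FiniteDimensional 𝕜 G]
    (hS : IsSVD S a u₁ v₁) (hT : IsSVD T b u₂ v₂) (hST : IsSVD (S ∘ₗ T) c u₃ v₃)
    (h : p.HolderTriple q r) (hp : 2 ≤ p) :
    ∑ i, c i ^ r ≤ (∑ i, a i ^ p) ^ (r / p) * (∑ i, b i ^ q) ^ (r / q) := by
  rcases le_total r 2 with hr | hr
  · exact hS.sum_rpow_comp_le_of_le_two hT hST h hp hr
  · exact hS.sum_rpow_comp_le_of_two_le_of_two_le hT hST h hp (hr.trans h.symm.lt.le)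

end Comp

end IsSVD

theorem exists_isSVD_of_inner_map_map {ι 𝕜 E F : Type*} [Fintype ι] [DecidableEq ι] [RCLike 𝕜]
    [NormedAddCommGroup E] [InnerProductSpace 𝕜 E] [NormedAddCommGroup F] [InnerProductSpace 𝕜 F]
    [FiniteDimensional 𝕜 F]
    {T : E →ₗ[𝕜] F} {s : ι → ℝ} {v : OrthonormalBasis ι 𝕜 E}
    (hF : Module.finrank 𝕜 F = Fintype.card ι) (hs : ∀ i, 0 ≤ s i)
    (hT : ∀ i j, inner 𝕜 (T (v i)) (T (v j)) = if i = j then (s i : 𝕜) ^ 2 else 0) :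
    ∃ u, IsSVD T s u v := by
  have hw : Orthonormal 𝕜 ({i | s i ≠ 0}.domRestrict fun i ↦ (s i : 𝕜)⁻¹ • T (v i)) := by
    rw [orthonormal_iff_ite]
    rintro ⟨i, hi : s i ≠ 0⟩ ⟨j, hj⟩
    by_cases hij : i = j
    · subst hij
      have hi' : (s i : 𝕜) ≠ 0 := RCLike.ofReal_ne_zero.2 hi
      simp only [Set.domRestrict_apply, inner_smul_left, inner_smul_right, hT, if_true, map_inv₀,
        RCLike.conj_ofReal]
      field_simp
    · simp [inner_smul_left, inner_smul_right, hT, hij]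
  obtain ⟨u, hu⟩ := hw.exists_orthonormalBasis_extension_of_card_eq hF
  refine ⟨u, hs, fun i ↦ ?_⟩
  by_cases hi : s i = 0
  · have : T (v i) = 0 := by simpa [hi] using hT i i
    simp [hi, this]
  · rw [hu i hi, smul_inv_smul₀ (RCLike.ofReal_ne_zero.2 hi)]

theorem exists_isSVD {𝕜 E F : Type*} [RCLike 𝕜]
    [NormedAddCommGroup E] [InnerProductSpace 𝕜 E] [NormedAddCommGroup F] [InnerProductSpace 𝕜 F]
    [FiniteDimensional 𝕜 E] [FiniteDimensional 𝕜 F] (T : E →ₗ[𝕜] F) {d : ℕ}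
    (hE : Module.finrank 𝕜 E = d) (hF : Module.finrank 𝕜 F = d) :
    ∃ u v, IsSVD T (fun i : Fin d ↦ T.singularValues i) u v := by
  let v := T.isSymmetric_adjoint_comp_self.eigenvectorBasis hE
  suffices hTv : ∀ i j, inner 𝕜 (T (v i)) (T (v j)) =
      if i = j then (T.singularValues i : 𝕜) ^ 2 else 0 by
    obtain ⟨u, hu⟩ := exists_isSVD_of_inner_map_map (hF.trans (Fintype.card_fin d).symm)
      (fun i : Fin d ↦ T.singularValues_nonneg i) hTv
    exact ⟨u, v, hu⟩
  intro i j
  rw [← LinearMap.adjoint_inner_right, ← LinearMap.comp_apply,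
    T.isSymmetric_adjoint_comp_self.apply_eigenvectorBasis, inner_smul_right, v.inner_eq_ite,
    ← T.sq_singularValues_fin hE]
  split_ifs with hij
  · simp [hij]
  · rw [mul_zero]

section MatrixPower

variable {n : Type*} [Fintype n] [DecidableEq n] {A : Matrix n n ℂ}

theorem mpow_eq_cfc (hA : A.IsHermitian) (t : ℝ) : mpow A t = cfc (fun x : ℝ ↦ x ^ t) A := by
  rw [hA.cfc_eq, mpow, dif_pos hA]
  rfl

theorem isHermitian_mpow (A : Matrix n n ℂ) (t : ℝ) : (mpow A t).IsHermitian := by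
  by_cases hA : A.IsHermitian
  · rw [mpow_eq_cfc hA]
    exact cfc_predicate _ A
  · simp [mpow, hA]

theorem trace_mpow (hA : A.IsHermitian) (t : ℝ) :
    (mpow A t).trace = ∑ i, ((hA.eigenvalues i ^ t : ℝ) : ℂ) := by
  rw [mpow, dif_pos hA, Matrix.trace_mul_comm, ← Matrix.mul_assoc, Unitary.coe_star_mul_self,
    Matrix.one_mul, Matrix.trace_diagonal]

theorem mpow_one (hA : A.IsHermitian) : mpow A 1 = A := by
  simp only [mpow_eq_cfc hA, Real.rpow_one]
  exact cfc_id' ℝ A hA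

open scoped MatrixOrder in
theorem mpow_pow (hA : A.PosSemidef) (t : ℝ) (k : ℕ) : mpow A t ^ k = mpow A (t * k) := by
  rw [mpow_eq_cfc hA.isHermitian, mpow_eq_cfc hA.isHermitian,
    ← cfc_pow _ _ _ (Matrix.finite_real_spectrum.continuousOn _) hA.isHermitian.isSelfAdjoint]
  exact cfc_congr fun x hx ↦
    (Real.rpow_mul_natCast (spectrum_nonneg_of_nonneg hA.nonneg hx) t k).symm

open scoped MatrixOrder in
theorem mpow_mpow (hA : A.PosSemidef) (s t : ℝ) : mpow (mpow A s) t = mpow A (s * t) := by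
  have hfin := Matrix.finite_real_spectrum (A := A)
  rw [mpow_eq_cfc (isHermitian_mpow A s), mpow_eq_cfc hA.isHermitian, mpow_eq_cfc hA.isHermitian,
    ← cfc_comp' _ _ _ ((hfin.image _).continuousOn _) (hfin.continuousOn _)
      hA.isHermitian.isSelfAdjoint]
  exact cfc_congr fun x hx ↦ (Real.rpow_mul (spectrum_nonneg_of_nonneg hA.nonneg hx) s t).symm

end MatrixPower

section SchattenNorm

variable {n : Type*} [Fintype n] [DecidableEq n] {p q r : ℝ}

/-- The Schatten `p`-norm `(Tr |A|^p)^(1/p)` of a square complex matrix, for a real exponent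
`p > 0`; it is only a quasinorm when `p < 1`. -/
noncomputable def schattenNorm (p : ℝ) (A : Matrix n n ℂ) : ℝ :=
  (∑ i : Fin (Fintype.card n), (toEuclideanLin A).singularValues i ^ p) ^ p⁻¹

theorem sum_singularValues_rpow_nonneg (p : ℝ) (A : Matrix n n ℂ) :
    0 ≤ ∑ i : Fin (Fintype.card n), (toEuclideanLin A).singularValues i ^ p :=
  Finset.sum_nonneg fun i _ ↦ Real.rpow_nonneg (LinearMap.singularValues_nonneg _ i) p

theorem schattenNorm_nonneg (p : ℝ) (A : Matrix n n ℂ) : 0 ≤ schattenNorm p A :=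
  Real.rpow_nonneg (sum_singularValues_rpow_nonneg p A) _

theorem eigenvalues₀_conjTranspose_mul_self (A : Matrix n n ℂ) (i : Fin (Fintype.card n)) :
    (isHermitian_conjTranspose_mul_self A).eigenvalues₀ i =
      (toEuclideanLin A).singularValues i ^ 2 := by
  have hA : toEuclideanLin (Aᴴ * A) = (toEuclideanLin A).adjoint ∘ₗ toEuclideanLin A := by
    rw [← toEuclideanLin_conjTranspose_eq_adjoint, ← toLpLin_mul]
  rw [LinearMap.sq_singularValues_fin _ (finrank_euclideanSpace (𝕜 := ℂ) (ι := n))]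
  simp only [IsHermitian.eigenvalues₀, hA]

theorem sum_singularValues_rpow_eq_trace (p : ℝ) (A : Matrix n n ℂ) :
    ∑ i : Fin (Fintype.card n), (toEuclideanLin A).singularValues i ^ p =
      (mpow (Aᴴ * A) (p / 2)).trace.re := by
  rw [trace_mpow (isHermitian_conjTranspose_mul_self A), ← Complex.ofReal_sum, Complex.ofReal_re]
  simp only [IsHermitian.eigenvalues]
  rw [Equiv.sum_comp _ fun i ↦ (isHermitian_conjTranspose_mul_self A).eigenvalues₀ i ^ (p / 2)]
  simp only [eigenvalues₀_conjTranspose_mul_self, ← Real.rpow_two,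
    ← Real.rpow_mul (LinearMap.singularValues_nonneg _ _), mul_div_cancel₀ p two_ne_zero]

theorem schattenNorm_congr {A B : Matrix n n ℂ} (h : Aᴴ * A = Bᴴ * B) (p : ℝ) :
    schattenNorm p A = schattenNorm p B := by
  simp only [schattenNorm, sum_singularValues_rpow_eq_trace, h]

theorem schattenNorm_rpow (hp : p ≠ 0) (A : Matrix n n ℂ) :
    schattenNorm p A ^ p = (mpow (Aᴴ * A) (p / 2)).trace.re := by
  rw [schattenNorm, Real.rpow_inv_rpow (sum_singularValues_rpow_nonneg p A) hp,
    sum_singularValues_rpow_eq_trace]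

theorem schattenNorm_mpow {A : Matrix n n ℂ} (hA : A.PosSemidef) (p t : ℝ) :
    schattenNorm p (mpow A t) = (mpow A (t * p)).trace.re ^ p⁻¹ := by
  have hexp : t * (2 : ℕ) * (p / 2) = t * p := by push_cast; ring
  rw [schattenNorm, sum_singularValues_rpow_eq_trace, (isHermitian_mpow A t).eq, ← sq,
    mpow_pow hA, mpow_mpow hA, hexp]

theorem schattenNorm_mul_le_of_two_le (h : p.HolderTriple q r) (hp : 2 ≤ p)
    (A B : Matrix n n ℂ) :
    schattenNorm r (A * B) ≤ schattenNorm p A * schattenNorm q B := by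
  have hn := finrank_euclideanSpace (𝕜 := ℂ) (ι := n)
  obtain ⟨_, _, hA⟩ := exists_isSVD (toEuclideanLin A) hn hn
  obtain ⟨_, _, hB⟩ := exists_isSVD (toEuclideanLin B) hn hn
  obtain ⟨_, _, hAB⟩ := exists_isSVD (toEuclideanLin A ∘ₗ toEuclideanLin B) hn hn
  have hpow := hA.sum_rpow_comp_le_of_two_le hB hAB h hp
  rw [← toLpLin_mul] at hpow
  have hSA := sum_singularValues_rpow_nonneg p A
  have hSB := sum_singularValues_rpow_nonneg q B
  have hr := h.ne_zero'
  calc schattenNorm r (A * B)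
      ≤ _ := Real.rpow_le_rpow (sum_singularValues_rpow_nonneg r _) hpow h.inv_nonneg'
    _ = schattenNorm p A * schattenNorm q B := by
        rw [Real.mul_rpow (by positivity) (by positivity), ← Real.rpow_mul hSA,
          ← Real.rpow_mul hSB, schattenNorm, schattenNorm]
        congr 2 <;> field_simp

theorem schattenNorm_pow_mul_le (hp : 2 ≤ p) (hq : 0 < q) (L B : Matrix n n ℂ) (k : ℕ) :
    schattenNorm (k * p⁻¹ + q⁻¹)⁻¹ (L ^ k * B) ≤ schattenNorm p L ^ k * schattenNorm q B := by
  induction k with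
  | zero => simp
  | succ k ih =>
    have h : p.HolderTriple (k * p⁻¹ + q⁻¹)⁻¹ ((k + 1 : ℕ) * p⁻¹ + q⁻¹)⁻¹ :=
      ⟨by push_cast; simp only [inv_inv]; ring, by positivity, by positivity⟩
    calc schattenNorm _ (L ^ (k + 1) * B) = schattenNorm _ (L * (L ^ k * B)) := by
          rw [pow_succ', Matrix.mul_assoc]
      _ ≤ schattenNorm p L * schattenNorm _ (L ^ k * B) := schattenNorm_mul_le_of_two_le h hp _ _
      _ ≤ schattenNorm p L * (schattenNorm p L ^ k * schattenNorm q B) :=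
          mul_le_mul_of_nonneg_left ih (schattenNorm_nonneg p L)
      _ = schattenNorm p L ^ (k + 1) * schattenNorm q B := by ring

theorem exists_pow_schattenNorm_eq (p : ℝ) {k : ℕ} (hk : k ≠ 0) (A : Matrix n n ℂ) :
    ∃ L : Matrix n n ℂ, (L ^ k)ᴴ * L ^ k = Aᴴ * A ∧
      schattenNorm (k * p) L ^ k = schattenNorm p A := by
  have hA := posSemidef_conjTranspose_mul_self A
  have hk' : (k : ℝ) ≠ 0 := Nat.cast_ne_zero.2 hk
  have hroot : mpow (Aᴴ * A) (1 / (2 * k)) ^ k = mpow (Aᴴ * A) (1 / 2) := by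
    rw [mpow_pow hA]
    congr 1
    field_simp
  refine ⟨mpow (Aᴴ * A) (1 / (2 * k)), ?_, ?_⟩
  · rw [hroot, (isHermitian_mpow _ _).eq, ← sq, mpow_pow hA, Nat.cast_two,
      one_div_mul_cancel two_ne_zero, mpow_one hA.isHermitian]
  · have hexp : 1 / (2 * k) * (k * p) = p / 2 := by field_simp
    have hsum := sum_singularValues_rpow_nonneg p A
    rw [schattenNorm_mpow hA, hexp, ← sum_singularValues_rpow_eq_trace, mul_comm, mul_inv,
      Real.rpow_mul hsum, Real.rpow_inv_natCast_pow (Real.rpow_nonneg hsum _) hk, schattenNorm]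

theorem schattenNorm_mul_le (h : p.HolderTriple q r) (A B : Matrix n n ℂ) :
    schattenNorm r (A * B) ≤ schattenNorm p A * schattenNorm q B := by
  obtain ⟨k, hk⟩ := exists_nat_ge (2 / p)
  have hk0 : (k : ℝ) ≠ 0 := ((div_pos two_pos h.pos).trans_le hk).ne'
  obtain ⟨L, hL, hLnorm⟩ := exists_pow_schattenNorm_eq p (Nat.cast_ne_zero.1 hk0) A
  have hr : (k * (k * p)⁻¹ + q⁻¹)⁻¹ = r := by
    rw [mul_inv, mul_inv_cancel_left₀ hk0, h.inv_add_inv_eq_inv, inv_inv]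
  have hLB : (A * B)ᴴ * (A * B) = (L ^ k * B)ᴴ * (L ^ k * B) := by
    rw [conjTranspose_mul, conjTranspose_mul, Matrix.mul_assoc, ← Matrix.mul_assoc Aᴴ, ← hL]
    simp only [Matrix.mul_assoc]
  rw [schattenNorm_congr hLB, ← hLnorm, ← hr]
  exact schattenNorm_pow_mul_le ((div_le_iff₀ h.pos).1 hk) h.symm.pos L B k

end SchattenNorm

theorem Qaz_eq_schattenNorm_rpow {n : Type*} [Fintype n] [DecidableEq n] {α z : ℝ} (hz : z ≠ 0)
    {ρ σ : Matrix n n ℂ} (hρ : ρ.PosSemidef) :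
    Qaz α z ρ σ =
      schattenNorm (2 * z) (mpow ρ (α / (2 * z)) * mpow σ ((1 - α) / (2 * z))) ^ (2 * z) := by
  have hsq : mpow ρ (α / (2 * z)) * mpow ρ (α / (2 * z)) = mpow ρ (α / z) := by
    rw [← sq, mpow_pow hρ, Nat.cast_two, mul_comm 2 z, ← div_div, div_mul_cancel₀ _ two_ne_zero]
  rw [schattenNorm_rpow (mul_ne_zero two_ne_zero hz), mul_div_cancel_left₀ z two_ne_zero,
    conjTranspose_mul, (isHermitian_mpow ρ _).eq, (isHermitian_mpow σ _).eq, Qaz, ← hsq]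
  simp only [Matrix.mul_assoc]

theorem schattenNorm_mpow_div {n : Type*} [Fintype n] [DecidableEq n] {A : Matrix n n ℂ}
    (hA : A.PosSemidef) {t r : ℝ} (ht : t ≠ 0) (hr : r ≠ 0) :
    schattenNorm (r / t) (mpow A (t / r)) ^ r = A.trace.re ^ t := by
  have htrace : 0 ≤ A.trace.re := (Complex.nonneg_iff.1 hA.trace_nonneg).1
  rw [schattenNorm_mpow hA, div_mul_div_cancel₀ hr, div_self ht, mpow_one hA.isHermitian,
    ← Real.rpow_mul htrace, inv_div, div_mul_cancel₀ _ hr]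

theorem Qaz_le_trace_rpow_general {n : Type*} [Fintype n] [DecidableEq n] {α z : ℝ}
    (hα0 : 0 < α) (hα1 : α < 1) (hz : 0 < z) {ρ σ : Matrix n n ℂ}
    (hρ : ρ.PosSemidef) (hσ : σ.PosSemidef) :
    Qaz α z ρ σ ≤ ρ.trace.re ^ α * σ.trace.re ^ (1 - α) := by
  have hα1' : 0 < 1 - α := sub_pos.2 hα1
  have h : (2 * z / α).HolderTriple (2 * z / (1 - α)) (2 * z) :=
    ⟨by field_simp; ring, by positivity, by positivity⟩
  let A := mpow ρ (α / (2 * z))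
  let B := mpow σ ((1 - α) / (2 * z))
  calc Qaz α z ρ σ = schattenNorm (2 * z) (A * B) ^ (2 * z) := Qaz_eq_schattenNorm_rpow hz.ne' hρ
    _ ≤ (schattenNorm (2 * z / α) A * schattenNorm (2 * z / (1 - α)) B) ^ (2 * z) :=
        Real.rpow_le_rpow (schattenNorm_nonneg _ _) (schattenNorm_mul_le h A B) h.nonneg'
    _ = schattenNorm (2 * z / α) A ^ (2 * z) * schattenNorm (2 * z / (1 - α)) B ^ (2 * z) :=
        Real.mul_rpow (schattenNorm_nonneg _ _) (schattenNorm_nonneg _ _)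
    _ = ρ.trace.re ^ α * σ.trace.re ^ (1 - α) := by
        rw [schattenNorm_mpow_div hρ hα0.ne' h.ne_zero',
          schattenNorm_mpow_div hσ hα1'.ne' h.ne_zero']

/-- Strict positivity bound: for `0 < α < 1` and `z > 0`,
`Q_{α,z}(ρ‖σ) ≤ (Tr ρ)^α (Tr σ)^{1−α}`. -/
theorem Qaz_le_trace_rpow (n : ℕ) (α z : ℝ) (hα0 : 0 < α) (hα1 : α < 1) (hz : 0 < z)
    (ρ σ : Matrix (Fin n) (Fin n) ℂ) (hρ : ρ.PosSemidef) (hσ : σ.PosSemidef) :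
    Qaz α z ρ σ ≤ (ρ.trace.re) ^ α * (σ.trace.re) ^ (1 - α) :=
  Qaz_le_trace_rpow_general hα0 hα1 hz hρ hσ
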